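/- arXiv:2509.12986 — 2 statements merged into one kernel-verified Lean document; each statement's English description precedes it below -/
import Mathlib

section
/- (Higher moment bound, diagonal case.) There is an absolute constant C > 0 with the following property: for all integers n ≥ 1, all dimensions d with d > √6·(2n)^{7/4}, every φ ∈ (0,1], every CPTP map Φ on M_d(ℂ) given with a Kraus representation of r operators and satisfying F_e(Φ) ≤ φ², and every s ∈ {1,…,d}, ∫_{U(d)} (X_{ss}(U))^n dμ(U) ≤ (1 + C·n²/d) · ( √r·(φ²·d + 2n)/(φ·d) )^{2n}. -/
open MeasureTheory Matrix

noncomputable section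

instance matrixMeasurableSpace {m n α : Type*} [MeasurableSpace α] :
    MeasurableSpace (Matrix m n α) :=
  inferInstanceAs (MeasurableSpace (m → n → α))

/-- `X_{st}(U) = ∑_i |⟨e_t, U* K_i U e_s⟩|²`. -/
def Xst {d r : ℕ} (K : Fin r → Matrix (Fin d) (Fin d) ℂ) (s t : Fin d)
    (U : Matrix.unitaryGroup (Fin d) ℂ) : ℝ :=
  ∑ i, ‖(star (U : Matrix (Fin d) (Fin d) ℂ) * K i * (U : Matrix (Fin d) (Fin d) ℂ)) t s‖ ^ 2

section UnitaryMoments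

open scoped Matrix.Norms.L2Operator

variable {d : ℕ}

/-- The quadratic form `⟨x, M x⟩` evaluated at the `s`-th column `x` of `U`. -/
def columnForm (s : Fin d) (M : Matrix (Fin d) (Fin d) ℂ)
    (U : Matrix.unitaryGroup (Fin d) ℂ) : ℂ :=
  (star (U : Matrix (Fin d) (Fin d) ℂ) * M * (U : Matrix (Fin d) (Fin d) ℂ)) s s

lemma columnForm_eq_sum (s : Fin d) (M : Matrix (Fin d) (Fin d) ℂ)
    (U : Matrix.unitaryGroup (Fin d) ℂ) :
    columnForm s M U = ∑ b, ∑ a, star (U.1 a s) * M a b * U.1 b s := by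
  simp only [columnForm, Matrix.mul_apply, Finset.sum_mul, Matrix.star_apply]

lemma measurable_unitaryGroup_entry (a b : Fin d) :
    Measurable fun U : Matrix.unitaryGroup (Fin d) ℂ => U.1 a b :=
  (measurable_pi_apply b).comp ((measurable_pi_apply a).comp measurable_subtype_coe)

@[fun_prop]
lemma measurable_columnForm (s : Fin d) (M : Matrix (Fin d) (Fin d) ℂ) :
    Measurable (columnForm s M) := by
  have h := measurable_unitaryGroup_entry (d := d)
  simp only [funext (columnForm_eq_sum s M)]
  refine Finset.measurable_sum _ fun b _ => Finset.measurable_sum _ fun a _ => ?_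
  exact ((continuous_star.measurable.comp (h a s)).mul_const _).mul (h b s)

instance : MeasurableMul (Matrix.unitaryGroup (Fin d) ℂ) where
  measurable_const_mul V := by
    refine Measurable.subtype_mk (measurable_pi_lambda _ fun a => measurable_pi_lambda _ fun b => ?_)
    simp only [Matrix.mul_apply]
    exact Finset.measurable_sum _ fun c _ => (measurable_unitaryGroup_entry c b).const_mul _
  measurable_mul_const V := by
    refine Measurable.subtype_mk (measurable_pi_lambda _ fun a => measurable_pi_lambda _ fun b => ?_)
    simp only [Matrix.mul_apply]
    exact Finset.measurable_sum _ fun c _ => (measurable_unitaryGroup_entry a c).mul_const _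

lemma norm_entry_le_l2_opNorm (M : Matrix (Fin d) (Fin d) ℂ) (a b : Fin d) : ‖M a b‖ ≤ ‖M‖ := by
  have h := Matrix.l2_opNorm_mulVec M (EuclideanSpace.single b 1)
  have h2 := PiLp.norm_apply_le (p := 2) ((EuclideanSpace.equiv (Fin d) ℂ).symm
    (M *ᵥ (EuclideanSpace.single b (1 : ℂ)).ofLp)) a
  simp at h h2
  exact h2.trans h

lemma norm_columnForm_le (s : Fin d) (M : Matrix (Fin d) (Fin d) ℂ)
    (U : Matrix.unitaryGroup (Fin d) ℂ) : ‖columnForm s M U‖ ≤ ‖M‖ := by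
  refine (norm_entry_le_l2_opNorm _ s s).trans ?_
  rw [CStarRing.norm_mul_mem_unitary _ U.2,
    CStarRing.norm_mem_unitary_mul _ (Unitary.star_mem U.2)]

lemma columnForm_add (s : Fin d) (M N : Matrix (Fin d) (Fin d) ℂ)
    (U : Matrix.unitaryGroup (Fin d) ℂ) :
    columnForm s (M + N) U = columnForm s M U + columnForm s N U := by
  simp [columnForm, Matrix.mul_add, Matrix.add_mul]

lemma columnForm_sub (s : Fin d) (M N : Matrix (Fin d) (Fin d) ℂ)
    (U : Matrix.unitaryGroup (Fin d) ℂ) :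
    columnForm s (M - N) U = columnForm s M U - columnForm s N U := by
  simp [columnForm, Matrix.mul_sub, Matrix.sub_mul]

lemma columnForm_smul (s : Fin d) (c : ℂ) (M : Matrix (Fin d) (Fin d) ℂ)
    (U : Matrix.unitaryGroup (Fin d) ℂ) :
    columnForm s (c • M) U = c * columnForm s M U := by
  simp [columnForm]

lemma columnForm_conjTranspose (s : Fin d) (M : Matrix (Fin d) (Fin d) ℂ)
    (U : Matrix.unitaryGroup (Fin d) ℂ) :
    columnForm s Mᴴ U = star (columnForm s M U) := by
  have h : star U.1 * Mᴴ * U.1 = (star U.1 * M * U.1)ᴴ := by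
    simp [Matrix.star_eq_conjTranspose, Matrix.conjTranspose_mul, Matrix.mul_assoc]
  rw [columnForm, columnForm, h, Matrix.conjTranspose_apply]

variable {ι : Type*}

lemma norm_prod_columnForm_le (s : Fin d) (S : Finset ι)
    (A : ι → Matrix (Fin d) (Fin d) ℂ) (U : Matrix.unitaryGroup (Fin d) ℂ) :
    ‖∏ j ∈ S, columnForm s (A j) U‖ ≤ ∏ j ∈ S, ‖A j‖ := by
  rw [norm_prod]
  exact Finset.prod_le_prod (fun _ _ => norm_nonneg _) fun j _ => norm_columnForm_le s _ U

variable {μ : Measure (Matrix.unitaryGroup (Fin d) ℂ)} [IsProbabilityMeasure μ]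

lemma integrable_prod_columnForm (s : Fin d) (S : Finset ι)
    (A : ι → Matrix (Fin d) (Fin d) ℂ) :
    Integrable (fun U => ∏ j ∈ S, columnForm s (A j) U) μ :=
  Integrable.of_bound (by fun_prop) _ (ae_of_all _ (norm_prod_columnForm_le s S A))

variable [DecidableEq ι]

/-- The infinitesimal action of `H` on the monomial `⟨x, N x⟩ ∏_{j ∈ S} ⟨x, A_j x⟩`. -/
def columnFormVariation (s : Fin d) (S : Finset ι)
    (A : ι → Matrix (Fin d) (Fin d) ℂ) (N H : Matrix (Fin d) (Fin d) ℂ)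
    (U : Matrix.unitaryGroup (Fin d) ℂ) : ℂ :=
  columnForm s (N * H - H * N) U * ∏ j ∈ S, columnForm s (A j) U +
    columnForm s N U * ∑ k ∈ S, (∏ j ∈ S.erase k, columnForm s (A j) U) *
      columnForm s (A k * H - H * A k) U

@[fun_prop]
lemma measurable_columnFormVariation (s : Fin d) (S : Finset ι)
    (A : ι → Matrix (Fin d) (Fin d) ℂ) (N H : Matrix (Fin d) (Fin d) ℂ) :
    Measurable (columnFormVariation s S A N H) := by
  unfold columnFormVariation
  fun_prop

lemma norm_columnFormVariation_le (s : Fin d) (S : Finset ι)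
    (A : ι → Matrix (Fin d) (Fin d) ℂ) (N H : Matrix (Fin d) (Fin d) ℂ)
    (U : Matrix.unitaryGroup (Fin d) ℂ) :
    ‖columnFormVariation s S A N H U‖ ≤ ‖N * H - H * N‖ * ∏ j ∈ S, ‖A j‖ +
      ‖N‖ * ∑ k ∈ S, (∏ j ∈ S.erase k, ‖A j‖) * ‖A k * H - H * A k‖ := by
  refine (norm_add_le _ _).trans (add_le_add ?_ ?_)
  · rw [norm_mul]
    gcongr
    · exact norm_columnForm_le s _ U
    · exact norm_prod_columnForm_le s S A U
  · rw [norm_mul]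
    gcongr
    · exact norm_columnForm_le s _ U
    · refine (norm_sum_le _ _).trans (Finset.sum_le_sum fun k _ => ?_)
      rw [norm_mul]
      gcongr
      · exact norm_prod_columnForm_le s _ A U
      · exact norm_columnForm_le s _ U

lemma integrable_columnFormVariation (s : Fin d) (S : Finset ι)
    (A : ι → Matrix (Fin d) (Fin d) ℂ) (N H : Matrix (Fin d) (Fin d) ℂ) :
    Integrable (columnFormVariation s S A N H) μ :=
  Integrable.of_bound (by fun_prop) _ (ae_of_all _ (norm_columnFormVariation_le s S A N H))

lemma hasDerivAt_columnForm_expUnitary (s : Fin d) (M : Matrix (Fin d) (Fin d) ℂ)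
    (a : selfAdjoint (Matrix (Fin d) (Fin d) ℂ)) (U : Matrix.unitaryGroup (Fin d) ℂ) (t : ℝ) :
    HasDerivAt (fun t : ℝ => columnForm s M (selfAdjoint.expUnitary (t • a) * U))
      (columnForm s (M * (Complex.I • a.1) - (Complex.I • a.1) * M)
        (selfAdjoint.expUnitary (t • a) * U)) t := by
  have hexp : HasDerivAt (fun t : ℝ => (selfAdjoint.expUnitary (t • a)).1)
      ((Complex.I • a.1) * (selfAdjoint.expUnitary (t • a)).1) t := by
    have h := hasDerivAt_exp_smul_const' (𝕂 := ℝ) (Complex.I • a.1) t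
    simpa [smul_comm _ Complex.I] using h
  have hstar := hexp.star
  have hM := ((hstar.mul_const M).mul hexp)
  have hU := (hM.const_mul (star U.1)).mul_const U.1
  let e : Matrix (Fin d) (Fin d) ℂ →L[ℝ] ℂ :=
    LinearMap.toContinuousLinearMap (Matrix.entryLinearMap ℝ ℂ s s)
  have he := e.hasFDerivAt.comp_hasDerivAt t hU
  have ha : star (Complex.I • a.1) = -(Complex.I • a.1) := by
    rw [star_smul, show star a.1 = a.1 from a.2]
    simp
  have he_apply : ∀ X, e X = X s s := fun _ => rfl
  refine (he.congr_deriv ?_).congr_of_eventuallyEq (Filter.Eventually.of_forall fun t => ?_)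
  · rw [he_apply, columnForm]
    refine congrArg (fun X : Matrix (Fin d) (Fin d) ℂ => X s s) ?_
    simp only [Submonoid.coe_mul, star_mul, ha]
    noncomm_ring
  · simp only [Function.comp_apply, he_apply, columnForm]
    refine congrArg (fun X : Matrix (Fin d) (Fin d) ℂ => X s s) ?_
    simp only [Submonoid.coe_mul, star_mul, Pi.mul_apply, mul_assoc]

lemma integral_columnFormVariation_I_smul_selfAdjoint [μ.IsMulLeftInvariant] (s : Fin d)
    (S : Finset ι) (A : ι → Matrix (Fin d) (Fin d) ℂ) (N : Matrix (Fin d) (Fin d) ℂ)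
    (a : selfAdjoint (Matrix (Fin d) (Fin d) ℂ)) :
    ∫ U, columnFormVariation s S A N (Complex.I • a.1) U ∂μ = 0 := by
  let P : Matrix.unitaryGroup (Fin d) ℂ → ℂ := fun U =>
    columnForm s N U * ∏ j ∈ S, columnForm s (A j) U
  have hP : Measurable P := by fun_prop
  have hPb : ∀ U, ‖P U‖ ≤ ‖N‖ * ∏ j ∈ S, ‖A j‖ := fun U => by
    rw [norm_mul]
    gcongr
    · exact norm_columnForm_le s _ U
    · exact norm_prod_columnForm_le s S A U
  have hderiv := (hasDerivAt_integral_of_dominated_loc_of_deriv_le (μ := μ) (𝕜 := ℝ) (x₀ := 0)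
    (s := Set.univ)
    (F := fun t U => P (selfAdjoint.expUnitary (t • a) * U))
    (F' := fun t U => columnFormVariation s S A N (Complex.I • a.1)
      (selfAdjoint.expUnitary (t • a) * U))
    (bound := fun _ => _) Filter.univ_mem
    (Filter.Eventually.of_forall fun t => (hP.comp (measurable_const_mul _)).aestronglyMeasurable)
    (Integrable.of_bound (hP.comp (measurable_const_mul _)).aestronglyMeasurable _
      (ae_of_all _ fun U => hPb _))
    ((measurable_columnFormVariation s S A N _).comp
      (measurable_const_mul _)).aestronglyMeasurable
    (ae_of_all _ fun U t _ => norm_columnFormVariation_le s S A N _ _)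
    (integrable_const _)
    (ae_of_all _ fun U t _ => by
      have h := (hasDerivAt_columnForm_expUnitary s N a U t).mul
        (HasDerivAt.fun_finsetProd (u := S) fun j _ =>
          hasDerivAt_columnForm_expUnitary s (A j) a U t)
      simp only [smul_eq_mul] at h
      exact h)).2
  simp only [integral_mul_left_eq_self (μ := μ) P] at hderiv
  simpa using hderiv.unique (hasDerivAt_const 0 _)

lemma columnFormVariation_add (s : Fin d) (S : Finset ι)
    (A : ι → Matrix (Fin d) (Fin d) ℂ) (N H H' : Matrix (Fin d) (Fin d) ℂ)
    (U : Matrix.unitaryGroup (Fin d) ℂ) :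
    columnFormVariation s S A N (H + H') U =
      columnFormVariation s S A N H U + columnFormVariation s S A N H' U := by
  simp only [columnFormVariation, Matrix.add_mul, columnForm_sub, columnForm_add,
    mul_sub, mul_add, Finset.sum_sub_distrib, Finset.sum_add_distrib]
  ring

lemma columnFormVariation_smul (s : Fin d) (S : Finset ι)
    (A : ι → Matrix (Fin d) (Fin d) ℂ) (c : ℂ) (N H : Matrix (Fin d) (Fin d) ℂ)
    (U : Matrix.unitaryGroup (Fin d) ℂ) :
    columnFormVariation s S A N (c • H) U = c * columnFormVariation s S A N H U := by
  simp only [columnFormVariation, Matrix.mul_smul, Matrix.smul_mul, ← smul_sub, columnForm_smul,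
    mul_left_comm _ c, ← Finset.mul_sum]
  ring

lemma integral_columnFormVariation [μ.IsMulLeftInvariant] (s : Fin d)
    (S : Finset ι) (A : ι → Matrix (Fin d) (Fin d) ℂ) (N H : Matrix (Fin d) (Fin d) ℂ) :
    ∫ U, columnFormVariation s S A N H U ∂μ = 0 := by
  have hH : H = (-Complex.I) • (Complex.I • (realPart H).1) + Complex.I • (imaginaryPart H).1 := by
    conv_lhs => rw [← realPart_add_I_smul_imaginaryPart H]
    simp [smul_smul]
  rw [hH]
  simp only [columnFormVariation_add, columnFormVariation_smul (c := -Complex.I)]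
  rw [integral_add ((integrable_columnFormVariation ..).const_mul _)
    (integrable_columnFormVariation ..), integral_const_mul,
    integral_columnFormVariation_I_smul_selfAdjoint,
    integral_columnFormVariation_I_smul_selfAdjoint]
  simp

lemma mul_single_mul_apply (X Y : Matrix (Fin d) (Fin d) ℂ) (a b i j : Fin d) :
    (X * Matrix.single a b (1 : ℂ) * Y : Matrix (Fin d) (Fin d) ℂ) i j = X i a * Y b j := by
  simp [Matrix.mul_apply, Matrix.single_apply, ite_and]

lemma sum_columnForm_single_mul_mul_columnForm_mul_single (s : Fin d)
    (B C : Matrix (Fin d) (Fin d) ℂ) (U : Matrix.unitaryGroup (Fin d) ℂ) :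
    ∑ a, ∑ b, columnForm s (Matrix.single b a 1 * B) U * columnForm s (C * Matrix.single a b 1) U =
      columnForm s (C * B) U := by
  have h (a b : Fin d) :
      columnForm s (Matrix.single b a 1 * B) U * columnForm s (C * Matrix.single a b 1) U =
        ((star U.1 * C) s a * (B * U.1) a s) * (star U.1 s b * U.1 b s) := by
    rw [columnForm, columnForm, ← mul_assoc, ← mul_assoc, mul_assoc _ B, mul_single_mul_apply,
      mul_single_mul_apply]
    ring
  have hU : (star U.1 * U.1) s s = 1 := by simp
  simp only [h, ← Finset.mul_sum, ← Matrix.mul_apply, hU, mul_one]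
  simp only [columnForm, mul_assoc]

lemma sum_columnForm_single_mul_mul_columnForm_single_mul (s : Fin d)
    (B C : Matrix (Fin d) (Fin d) ℂ) (U : Matrix.unitaryGroup (Fin d) ℂ) :
    ∑ a, ∑ b, columnForm s (Matrix.single b a 1 * B) U * columnForm s (Matrix.single a b 1 * C) U =
      columnForm s B U * columnForm s C U := by
  have h (a b : Fin d) :
      columnForm s (Matrix.single b a 1 * B) U * columnForm s (Matrix.single a b 1 * C) U =
        (star U.1 s a * (B * U.1) a s) * (star U.1 s b * (C * U.1) b s) := by
    rw [columnForm, columnForm, ← mul_assoc, ← mul_assoc, mul_assoc _ B, mul_assoc _ C,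
      mul_single_mul_apply, mul_single_mul_apply]
    ring
  simp only [h, ← Finset.mul_sum, ← Matrix.mul_apply, ← Finset.sum_mul]
  simp only [columnForm, mul_assoc]

lemma sum_columnForm_commutator_single (s : Fin d) (B : Matrix (Fin d) (Fin d) ℂ)
    (U : Matrix.unitaryGroup (Fin d) ℂ) :
    ∑ a, ∑ b, columnForm s (Matrix.single b a 1 * B * Matrix.single a b 1 -
      Matrix.single a b 1 * (Matrix.single b a 1 * B)) U = B.trace - d * columnForm s B U := by
  have h₁ (a b : Fin d) : columnForm s (Matrix.single b a 1 * B * Matrix.single a b 1) U =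
      B a a * (star U.1 s b * U.1 b s) := by
    have : star U.1 * (Matrix.single b a 1 * B * Matrix.single a b 1) * U.1 =
      (star U.1 * Matrix.single b a 1 * B) * Matrix.single a b 1 * U.1 := by noncomm_ring
    rw [columnForm, this, mul_single_mul_apply, mul_single_mul_apply]
    ring
  have h₂ (a b : Fin d) : columnForm s (Matrix.single a b 1 * (Matrix.single b a 1 * B)) U =
      star U.1 s a * (B * U.1) a s := by
    have : star U.1 * (Matrix.single a b 1 * (Matrix.single b a 1 * B)) * U.1 =
      star U.1 * (Matrix.single a b 1 * Matrix.single b a 1) * (B * U.1) := by noncomm_ring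
    rw [columnForm, this, Matrix.single_mul_single_same, one_mul, mul_single_mul_apply]
  have hU : (star U.1 * U.1) s s = 1 := by simp
  have hB : columnForm s B U = ∑ a, star U.1 s a * (B * U.1) a s := by
    rw [columnForm, mul_assoc, Matrix.mul_apply]
  simp only [columnForm_sub, h₁, h₂, Finset.sum_sub_distrib]
  congr 1
  · simp only [← Finset.mul_sum, ← Matrix.mul_apply, hU, mul_one]
    rfl
  · rw [hB, Finset.mul_sum]
    simp only [Finset.sum_const, Finset.card_univ, Fintype.card_fin, nsmul_eq_mul]

lemma sum_columnFormVariation_single (s : Fin d) (S : Finset ι)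
    (A : ι → Matrix (Fin d) (Fin d) ℂ) (B : Matrix (Fin d) (Fin d) ℂ)
    (U : Matrix.unitaryGroup (Fin d) ℂ) :
    ∑ a, ∑ b, columnFormVariation s S A (Matrix.single b a 1 * B) (Matrix.single a b 1) U =
      B.trace * ∏ j ∈ S, columnForm s (A j) U
        + ∑ k ∈ S, ∏ j ∈ S, columnForm s (Function.update A k (A k * B) j) U
        - (d + S.card) * (columnForm s B U * ∏ j ∈ S, columnForm s (A j) U) := by
  have hupdate : ∀ k ∈ S, ∏ j ∈ S, columnForm s (Function.update A k (A k * B) j) U =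
      (∏ j ∈ S.erase k, columnForm s (A j) U) * columnForm s (A k * B) U := fun k hk => by
    rw [← Finset.prod_erase_mul _ _ hk, Function.update_self]
    congr 1
    exact Finset.prod_congr rfl fun j hj => by
      rw [Function.update_of_ne (Finset.ne_of_mem_erase hj)]
  have hfull : ∀ k ∈ S, (∏ j ∈ S.erase k, columnForm s (A j) U) *
      (columnForm s B U * columnForm s (A k) U) =
        columnForm s B U * ∏ j ∈ S, columnForm s (A j) U := fun k hk => by
    rw [← Finset.prod_erase_mul _ _ hk]
    ring
  have hcross : ∑ a, ∑ b, columnForm s (Matrix.single b a 1 * B) U *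
      ∑ k ∈ S, (∏ j ∈ S.erase k, columnForm s (A j) U) *
        columnForm s (A k * Matrix.single a b 1 - Matrix.single a b 1 * A k) U =
      ∑ k ∈ S, (∏ j ∈ S.erase k, columnForm s (A j) U) *
        (columnForm s (A k * B) U - columnForm s B U * columnForm s (A k) U) := by
    simp only [Finset.mul_sum (s := S)]
    simp only [Finset.sum_comm (t := S)]
    refine Finset.sum_congr rfl fun k _ => ?_
    rw [← sum_columnForm_single_mul_mul_columnForm_mul_single,
      ← sum_columnForm_single_mul_mul_columnForm_single_mul]
    simp only [← Finset.sum_sub_distrib, Finset.mul_sum, columnForm_sub]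
    refine Finset.sum_congr rfl fun a _ => Finset.sum_congr rfl fun b _ => ?_
    ring
  simp only [columnFormVariation, Finset.sum_add_distrib, ← Finset.sum_mul, hcross,
    sum_columnForm_commutator_single, mul_sub, Finset.sum_sub_distrib]
  rw [Finset.sum_congr rfl hupdate, Finset.sum_congr rfl hfull, Finset.sum_const, nsmul_eq_mul]
  ring

/-- The recursion for the moments of a uniformly distributed unit vector, obtained by
integration by parts. -/
lemma integral_columnForm_mul_prod [μ.IsMulLeftInvariant] (s : Fin d) (S : Finset ι)
    (A : ι → Matrix (Fin d) (Fin d) ℂ) (B : Matrix (Fin d) (Fin d) ℂ) :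
    (d + S.card) * ∫ U, columnForm s B U * ∏ j ∈ S, columnForm s (A j) U ∂μ =
      B.trace * ∫ U, ∏ j ∈ S, columnForm s (A j) U ∂μ
        + ∑ k ∈ S, ∫ U, ∏ j ∈ S, columnForm s (Function.update A k (A k * B) j) U ∂μ := by
  have hzero : ∫ U, ∑ a, ∑ b, columnFormVariation s S A (Matrix.single b a 1 * B)
      (Matrix.single a b 1) U ∂μ = 0 := by
    rw [integral_finsetSum _ fun a _ => integrable_finsetSum _ fun b _ =>
      integrable_columnFormVariation ..]
    refine Finset.sum_eq_zero fun a _ => ?_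
    rw [integral_finsetSum _ fun b _ => integrable_columnFormVariation ..]
    exact Finset.sum_eq_zero fun b _ => integral_columnFormVariation ..
  have hint : Integrable (fun U => columnForm s B U * ∏ j ∈ S, columnForm s (A j) U) μ :=
    (integrable_prod_columnForm s S A).bdd_mul (measurable_columnForm s B).aestronglyMeasurable
      (ae_of_all _ (norm_columnForm_le s B))
  have hsum : Integrable (fun U => ∑ k ∈ S, ∏ j ∈ S,
      columnForm s (Function.update A k (A k * B) j) U) μ :=
    integrable_finsetSum _ fun k _ => integrable_prod_columnForm ..
  simp only [sum_columnFormVariation_single] at hzero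
  rw [integral_sub (((integrable_prod_columnForm s S A).const_mul _).fun_add hsum)
    (hint.const_mul _), integral_add ((integrable_prod_columnForm s S A).const_mul _) hsum,
    integral_const_mul, integral_const_mul,
    integral_finsetSum _ fun k _ => integrable_prod_columnForm ..] at hzero
  exact (sub_eq_zero.mp hzero).symm

lemma norm_integral_prod_columnForm_le [μ.IsMulLeftInvariant] (s : Fin d) {φ m : ℝ}
    (hφ : 0 < φ) (hφ_le : φ ≤ 1) (f : ℕ) (F S : Finset ι) (A : ι → Matrix (Fin d) (Fin d) ℂ)
    (hFS : F ⊆ S) (hF : F.card = f) (hS : (S.card : ℝ) ≤ m) (hA : ∀ j ∈ S, ‖A j‖ ≤ 1)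
    (htr : ∀ j ∈ F, ‖(A j).trace‖ ≤ φ * d) :
    ‖∫ U, ∏ j ∈ S, columnForm s (A j) U ∂μ‖ ≤ (φ + m / (φ * d)) ^ f := by
  have hd : (0 : ℝ) < d := by exact_mod_cast s.pos
  have hm : 0 ≤ m := (Nat.cast_nonneg _).trans hS
  set β := φ + m / (φ * d) with hβ
  have hφβ : φ ≤ β := le_add_of_nonneg_right (by positivity)
  have hβ_pos : 0 < β := hφ.trans_le hφβ
  induction f using Nat.strong_induction_on generalizing F S A with
  | _ f ih =>
  obtain rfl | ⟨f, rfl⟩ : f = 0 ∨ ∃ f', f = f' + 1 := by cases f <;> simp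
  · rw [pow_zero]
    refine (norm_integral_le_of_norm_le_const (ae_of_all _ fun U =>
      (norm_prod_columnForm_le s S A U).trans
        (Finset.prod_le_one (fun _ _ => norm_nonneg _) hA))).trans ?_
    simp
  obtain ⟨i, hi⟩ := Finset.card_pos.mp (hF.symm ▸ Nat.succ_pos f : 0 < F.card)
  have hFi : (F.erase i).card = f := by rw [Finset.card_erase_of_mem hi, hF]; rfl
  have hSi : ((S.erase i).card : ℝ) ≤ m :=
    (Nat.cast_le.mpr (Finset.card_le_card (Finset.erase_subset i S))).trans hS
  have hAi : ∀ j ∈ S.erase i, ‖A j‖ ≤ 1 := fun j hj => hA j (Finset.mem_of_mem_erase hj)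
  have hrec := integral_columnForm_mul_prod (μ := μ) s (S.erase i) A (A i)
  have hprod (U : Matrix.unitaryGroup (Fin d) ℂ) :=
    Finset.mul_prod_erase S (fun j => columnForm s (A j) U) (hFS hi)
  simp only [hprod] at hrec
  have hterm : ∀ k ∈ S.erase i, ‖∫ U, ∏ j ∈ S.erase i,
      columnForm s (Function.update A k (A k * A i) j) U ∂μ‖ ≤ β ^ f / φ := fun k hk => by
    have hbound : ‖∫ U, ∏ j ∈ S.erase i,
        columnForm s (Function.update A k (A k * A i) j) U ∂μ‖ ≤
          β ^ ((F.erase i).erase k).card := by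
      refine ih _ ?_ _ _ _ ?_ rfl hSi ?_ ?_
      · exact Nat.lt_succ_of_le (hFi ▸ Finset.card_le_card (Finset.erase_subset _ _))
      · exact (Finset.erase_subset _ _).trans (Finset.erase_subset_erase i hFS)
      · intro j hj
        obtain rfl | hjk := eq_or_ne j k
        · rw [Function.update_self]
          exact (norm_mul_le _ _).trans
            (mul_le_one₀ (hAi j hj) (norm_nonneg _) (hA i (hFS hi)))
        · rw [Function.update_of_ne hjk]
          exact hAi j hj
      · intro j hj
        rw [Function.update_of_ne (Finset.ne_of_mem_erase hj)]
        exact htr j (Finset.mem_of_mem_erase (Finset.mem_of_mem_erase hj))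
    refine hbound.trans ((le_div_iff₀ hφ).mpr ?_)
    by_cases hkF : k ∈ F.erase i
    · have hcard := Finset.card_erase_add_one hkF
      rw [← hFi, ← hcard, pow_succ]
      gcongr
    · rw [Finset.erase_eq_of_notMem hkF, hFi]
      exact mul_le_of_le_one_right (by positivity) hφ_le
  have hfirst := ih f (Nat.lt_succ_self f) (F.erase i) (S.erase i) A
    (Finset.erase_subset_erase i hFS) hFi hSi hAi fun j hj => htr j (Finset.mem_of_mem_erase hj)
  have hnorm : (d + (S.erase i).card : ℝ) * ‖∫ U, ∏ j ∈ S, columnForm s (A j) U ∂μ‖ ≤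
      φ * d * β ^ f + (S.erase i).card * (β ^ f / φ) := by
    have hcast : ‖((d : ℂ) + (S.erase i).card)‖ = d + (S.erase i).card := by
      exact_mod_cast Complex.norm_natCast (d + (S.erase i).card)
    rw [← hcast, ← norm_mul, hrec]
    refine (norm_add_le _ _).trans (add_le_add ?_ ?_)
    · rw [norm_mul]
      gcongr
      exact htr i hi
    · refine (norm_sum_le_of_le _ hterm).trans_eq ?_
      rw [Finset.sum_const, nsmul_eq_mul]
  refine le_of_mul_le_mul_left ?_ hd
  calc (d : ℝ) * ‖∫ U, ∏ j ∈ S, columnForm s (A j) U ∂μ‖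
      ≤ (d + (S.erase i).card : ℝ) * ‖∫ U, ∏ j ∈ S, columnForm s (A j) U ∂μ‖ := by
        gcongr
        simp
    _ ≤ φ * d * β ^ f + m * (β ^ f / φ) := hnorm.trans (by gcongr)
    _ = d * β ^ (f + 1) := by
        rw [pow_succ, hβ]
        field_simp

lemma integral_norm_columnForm_pow_le [μ.IsMulLeftInvariant] (s : Fin d) {φ : ℝ}
    (hφ : 0 < φ) (hφ_le : φ ≤ 1) (n : ℕ) (K : Matrix (Fin d) (Fin d) ℂ)
    (hK : ‖K‖ ≤ 1) (htr : ‖K.trace‖ ≤ φ * d) :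
    ∫ U, (‖columnForm s K U‖ ^ 2) ^ n ∂μ ≤ (φ + 2 * n / (φ * d)) ^ (2 * n) := by
  let A : Fin n ⊕ Fin n → Matrix (Fin d) (Fin d) ℂ := Sum.elim (fun _ => K) fun _ => Kᴴ
  have h := norm_integral_prod_columnForm_le (μ := μ) s (m := 2 * n) hφ hφ_le (2 * n)
    Finset.univ Finset.univ A subset_rfl (by simp [two_mul]) (by simp [two_mul])
    (by simp [A, hK, Matrix.l2_opNorm_conjTranspose]) (by simp [A, htr, Matrix.trace_conjTranspose])
  have hA (U : Matrix.unitaryGroup (Fin d) ℂ) :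
      ∏ j, columnForm s (A j) U = (((‖columnForm s K U‖ ^ 2) ^ n : ℝ) : ℂ) := by
    simp [A, Fintype.prod_sum_type, columnForm_conjTranspose, ← mul_pow, Complex.mul_conj']
  simp only [hA, integral_complex_ofReal] at h
  exact (le_abs_self _).trans (by simpa using h)

open scoped MatrixOrder ComplexOrder in
lemma l2_opNorm_le_one_of_sum_conjTranspose_mul_self_eq_one {r : ℕ}
    (K : Fin r → Matrix (Fin d) (Fin d) ℂ) (hK : ∑ i, (K i)ᴴ * K i = 1) (i : Fin r) :
    ‖K i‖ ≤ 1 := by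
  have hle : (K i)ᴴ * K i ≤ 1 := hK ▸ Finset.single_le_sum
    (f := fun i => (K i)ᴴ * K i) (fun j _ => star_mul_self_nonneg (K j)) (Finset.mem_univ i)
  have h := CStarAlgebra.norm_le_norm_of_nonneg_of_le (star_mul_self_nonneg (K i)) hle
  rw [Matrix.star_eq_conjTranspose, Matrix.l2_opNorm_conjTranspose_mul_self] at h
  have hone : ‖(1 : Matrix (Fin d) (Fin d) ℂ)‖ ≤ 1 := by
    rw [← Matrix.diagonal_one, Matrix.l2_opNorm_diagonal]
    exact (pi_norm_le_iff_of_nonneg zero_le_one).mpr fun _ => by simp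
  nlinarith [norm_nonneg (K i)]

end UnitaryMoments

/-- Higher moment bound, diagonal case. -/
theorem higher_moment_bound_diag :
    ∃ C : ℝ, 0 < C ∧
      ∀ (n d r : ℕ), 1 ≤ n →
        Real.sqrt 6 * ((2 * n : ℕ) : ℝ) ^ ((7 : ℝ) / 4) < (d : ℝ) →
        ∀ φ : ℝ, 0 < φ → φ ≤ 1 →
          ∀ (μ : Measure (Matrix.unitaryGroup (Fin d) ℂ)),
            IsProbabilityMeasure μ → μ.IsMulLeftInvariant →
            ∀ (K : Fin r → Matrix (Fin d) (Fin d) ℂ),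
              (∑ i, (K i)ᴴ * K i = 1) →
              ((∑ i, ‖(K i).trace‖ ^ 2) / (d : ℝ) ^ 2 ≤ φ ^ 2) →
              ∀ s : Fin d,
                ∫ U, (Xst K s s U) ^ n ∂μ ≤
                  (1 + C * (n : ℝ) ^ 2 / d) *
                    (Real.sqrt r * (φ ^ 2 * d + 2 * n) / (φ * d)) ^ (2 * n) := by
  refine ⟨1, one_pos, fun n d r hn _ φ hφ hφ_le μ _ _ K hK htr s => ?_⟩
  have hd : (0 : ℝ) < d := by exact_mod_cast s.pos
  have hKnorm := l2_opNorm_le_one_of_sum_conjTranspose_mul_self_eq_one K hK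
  have hKtr (i : Fin r) : ‖(K i).trace‖ ≤ φ * d := by
    rw [div_le_iff₀ (by positivity), ← mul_pow] at htr
    refine le_of_sq_le_sq ((Finset.single_le_sum (f := fun i => ‖(K i).trace‖ ^ 2)
      (fun j _ => by positivity) (Finset.mem_univ i)).trans htr) (by positivity)
  have hint (i : Fin r) : Integrable (fun U => (‖columnForm s (K i) U‖ ^ 2) ^ n) μ := by
    refine Integrable.of_bound (C := 1) (by fun_prop) (ae_of_all _ fun U => ?_)
    rw [Real.norm_of_nonneg (by positivity)]
    exact pow_le_one₀ (by positivity) (pow_le_one₀ (norm_nonneg _)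
      ((norm_columnForm_le s (K i) U).trans (hKnorm i)))
  obtain ⟨n, rfl⟩ := Nat.exists_eq_add_of_le' hn
  have hpow (U : Matrix.unitaryGroup (Fin d) ℂ) :
      Xst K s s U ^ (n + 1) ≤ (r : ℝ) ^ n * ∑ i, (‖columnForm s (K i) U‖ ^ 2) ^ (n + 1) := by
    simpa [Xst, columnForm] using pow_sum_le_card_mul_sum_pow (s := Finset.univ)
      (f := fun i => ‖columnForm s (K i) U‖ ^ 2) (fun i _ => by positivity) n
  have hsum : ∫ U, Xst K s s U ^ (n + 1) ∂μ ≤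
      (r : ℝ) ^ (n + 1) * (φ + 2 * (n + 1 : ℕ) / (φ * d)) ^ (2 * (n + 1)) := by
    calc ∫ U, Xst K s s U ^ (n + 1) ∂μ
        ≤ ∫ U, (r : ℝ) ^ n * ∑ i, (‖columnForm s (K i) U‖ ^ 2) ^ (n + 1) ∂μ := by
          refine integral_mono_of_nonneg (ae_of_all _ fun U => ?_)
            ((integrable_finsetSum _ fun i _ => hint i).const_mul _) (ae_of_all _ hpow)
          exact pow_nonneg (Finset.sum_nonneg fun i _ => by positivity) _
      _ = (r : ℝ) ^ n * ∑ i, ∫ U, (‖columnForm s (K i) U‖ ^ 2) ^ (n + 1) ∂μ := by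
          rw [integral_const_mul, integral_finsetSum _ fun i _ => hint i]
      _ ≤ (r : ℝ) ^ n * ∑ _i : Fin r, (φ + 2 * (n + 1 : ℕ) / (φ * d)) ^ (2 * (n + 1)) := by
          gcongr with i
          exact integral_norm_columnForm_pow_le s hφ hφ_le (n + 1) (K i) (hKnorm i) (hKtr i)
      _ = _ := by
          rw [Finset.sum_const, Finset.card_univ, Fintype.card_fin, nsmul_eq_mul, pow_succ,
            mul_assoc]
  have hbase : Real.sqrt r * (φ ^ 2 * d + 2 * (n + 1 : ℕ)) / (φ * d) =
      Real.sqrt r * (φ + 2 * (n + 1 : ℕ) / (φ * d)) := by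
    field_simp
  rw [hbase, mul_pow, pow_mul (Real.sqrt r), Real.sq_sqrt (Nat.cast_nonneg r)]
  refine hsum.trans (le_mul_of_one_le_left (by positivity) ?_)
  exact le_add_of_nonneg_right (by positivity)

end
end

section
/- (Deviation bound, off-diagonal case.) There is an absolute constant C > 0 with the following property: for all integers θ > 0 and θ₀ with 0 < θ₀ ≤ √d, all dimensions d with d > √6·(2θ₀)^{7/4}, every CPTP map Φ on M_d(ℂ) given with a Kraus representation of r operators, all s, t ∈ {1,…,d} with s ≠ t, and every ε > 0, μ{ U ∈ U(d) : X_{st}(U) ≥ ε } ≤ C · e^{−θ·ε} · ( exp( r·θ·θ₀·(d + θ₀)/d² ) + e^{θ} · ( r·θ₀·(d + θ₀)/d² )^{θ₀} ). -/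
open MeasureTheory Matrix

noncomputable section

/-- The sign `±1` encoded by a Boolean. -/
def boolSign (b : Bool) : ℝ := if b then 1 else -1

lemma boolSign_sq (b : Bool) : boolSign b ^ 2 = 1 := by
  cases b <;> simp [boolSign]

lemma sum_range_two_mul_succ (f : ℕ → ℝ) (m : ℕ) :
    ∑ j ∈ Finset.range (2 * m + 1), f j =
      ∑ k ∈ Finset.range (m + 1), f (2 * k) + ∑ k ∈ Finset.range m, f (2 * k + 1) := by
  induction m with
  | zero => simp
  | succ m ih =>
    rw [show 2 * (m + 1) + 1 = 2 * m + 1 + 1 + 1 by ring, Finset.sum_range_succ,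
      Finset.sum_range_succ, ih, Finset.sum_range_succ _ (m + 1), Finset.sum_range_succ _ m,
      Finset.sum_range_succ (fun k => f (2 * k + 1)) m]
    ring_nf

/-- The even part of the binomial expansion. -/
lemma add_pow_two_mul_add_sub_pow_two_mul (x y : ℝ) (m : ℕ) :
    (x + y) ^ (2 * m) + (x - y) ^ (2 * m) =
      2 * ∑ k ∈ Finset.range (m + 1),
        ((2 * m).choose (2 * k) : ℝ) * (y ^ 2) ^ k * x ^ (2 * (m - k)) := by
  rw [add_comm x y, show x - y = -y + x by ring, add_pow, add_pow, sum_range_two_mul_succ,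
    sum_range_two_mul_succ, Finset.mul_sum]
  have hodd : ∑ k ∈ Finset.range m,
      (-y) ^ (2 * k + 1) * x ^ (2 * m - (2 * k + 1)) * ((2 * m).choose (2 * k + 1) : ℝ) =
      -∑ k ∈ Finset.range m,
        y ^ (2 * k + 1) * x ^ (2 * m - (2 * k + 1)) * ((2 * m).choose (2 * k + 1) : ℝ) := by
    rw [← Finset.sum_neg_distrib]
    refine Finset.sum_congr rfl fun k _ => ?_
    rw [Odd.neg_pow ⟨k, rfl⟩]
    ring
  have heven : ∀ k, (-y) ^ (2 * k) = y ^ (2 * k) := fun k => Even.neg_pow (even_two_mul k) y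
  simp only [hodd, heven]
  rw [add_add_add_comm, add_neg_cancel, add_zero, ← Finset.sum_add_distrib]
  refine Finset.sum_congr rfl fun k _ => ?_
  rw [← pow_mul, Nat.mul_sub]
  ring

/-- The `2m`-th moment `(2m - 1)‼` of a standard Gaussian. -/
def gaussianMoment (m : ℕ) : ℝ := (2 * m).factorial / (2 ^ m * m.factorial)

lemma gaussianMoment_nonneg (m : ℕ) : 0 ≤ gaussianMoment m := by
  unfold gaussianMoment; positivity

lemma gaussianMoment_le_pow (m : ℕ) : gaussianMoment m ≤ (m : ℝ) ^ m := by
  unfold gaussianMoment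
  rw [div_le_iff₀ (by positivity)]
  have h : (((2 * m).factorial : ℕ) : ℝ) ≤ (((2 * m) ^ m * m.factorial : ℕ) : ℝ) :=
    Nat.cast_le.mpr (Nat.factorial_two_mul_le m)
  push_cast [mul_pow] at h
  linarith

lemma choose_mul_gaussianMoment_le {m k : ℕ} (hk : k ≤ m) :
    ((2 * m).choose (2 * k) : ℝ) * gaussianMoment (m - k) ≤ gaussianMoment m * m.choose k := by
  obtain ⟨j, rfl⟩ := Nat.exists_eq_add_of_le hk
  have h : (((2 ^ k * k.factorial : ℕ)) : ℝ) ≤ (((2 * k).factorial : ℕ) : ℝ) :=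
    Nat.cast_le.mpr (Nat.two_pow_mul_factorial_le_factorial_two_mul k)
  push_cast at h
  unfold gaussianMoment
  rw [Nat.cast_choose ℝ hk, Nat.cast_choose ℝ (show 2 * k ≤ 2 * (k + j) by omega),
    show 2 * (k + j) - 2 * k = 2 * j by omega, Nat.add_sub_cancel_left]
  have e₁ : ((2 * (k + j)).factorial : ℝ) / ((2 * k).factorial * (2 * j).factorial) *
      ((2 * j).factorial / (2 ^ j * j.factorial)) =
      ((2 * (k + j)).factorial : ℝ) / ((2 * k).factorial * (2 ^ j * j.factorial)) := by
    field_simp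
  have e₂ : ((2 * (k + j)).factorial : ℝ) / (2 ^ (k + j) * (k + j).factorial) *
      ((k + j).factorial / (k.factorial * j.factorial)) =
      ((2 * (k + j)).factorial : ℝ) / ((2 ^ k * k.factorial) * (2 ^ j * j.factorial)) := by
    field_simp
    ring
  rw [e₁, e₂]
  gcongr

/-- Khintchine's inequality for even moments of a real Rademacher sum. -/
lemma sum_rademacher_pow_le (n m : ℕ) (c : Fin n → ℝ) :
    ∑ ε : Fin n → Bool, (∑ j, boolSign (ε j) * c j) ^ (2 * m) ≤
      2 ^ n * (gaussianMoment m * (∑ j, c j ^ 2) ^ m) := by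
  induction n generalizing m with
  | zero => cases m <;> simp [gaussianMoment]
  | succ n ih =>
    set σ := ∑ j : Fin n, c j.succ ^ 2 with hσ
    have hσ0 : 0 ≤ σ := Finset.sum_nonneg fun _ _ => sq_nonneg _
    have hsplit : ∑ ε : Fin (n + 1) → Bool, (∑ j, boolSign (ε j) * c j) ^ (2 * m) =
        2 * ∑ k ∈ Finset.range (m + 1), ((2 * m).choose (2 * k) : ℝ) * (c 0 ^ 2) ^ k *
          ∑ ε : Fin n → Bool, (∑ j, boolSign (ε j) * c j.succ) ^ (2 * (m - k)) := by
      rw [← Equiv.sum_comp (Fin.consEquiv fun _ : Fin (n + 1) => Bool)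
        (fun ε : Fin (n + 1) → Bool => (∑ j, boolSign (ε j) * c j) ^ (2 * m)),
        Fintype.sum_prod_type_right]
      simp only [Finset.mul_sum]
      rw [Finset.sum_comm (s := Finset.range _)]
      refine Finset.sum_congr rfl fun ε _ => ?_
      rw [← Finset.mul_sum, ← add_pow_two_mul_add_sub_pow_two_mul]
      simp [Fin.consEquiv, Fin.sum_univ_succ, boolSign]
      ring
    rw [hsplit, Fin.sum_univ_succ, ← hσ, add_pow, pow_succ' 2 n, mul_assoc 2]
    gcongr 2 * ?_
    simp only [Finset.mul_sum (Finset.range _)]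
    refine Finset.sum_le_sum fun k hk => ?_
    calc _ ≤ ((2 * m).choose (2 * k) : ℝ) * (c 0 ^ 2) ^ k *
          (2 ^ n * (gaussianMoment (m - k) * σ ^ (m - k))) := by
          gcongr
          exact ih (m - k) fun j => c j.succ
      _ = 2 ^ n * ((((2 * m).choose (2 * k) : ℝ) * gaussianMoment (m - k)) *
          ((c 0 ^ 2) ^ k * σ ^ (m - k))) := by ring
      _ ≤ 2 ^ n * ((gaussianMoment m * m.choose k) * ((c 0 ^ 2) ^ k * σ ^ (m - k))) := by
          refine mul_le_mul_of_nonneg_left (mul_le_mul_of_nonneg_right ?_ (by positivity))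
            (by positivity)
          exact choose_mul_gaussianMoment_le (Nat.lt_succ_iff.mp (Finset.mem_range.mp hk))
      _ = _ := by ring

/-- Khintchine's inequality for even moments of the norm of a vector-valued Rademacher sum. -/
lemma sum_rademacher_sq_sum_pow_le {κ : Type*} [Fintype κ] (n m : ℕ) (c : κ → Fin n → ℝ) :
    ∑ ε : Fin n → Bool, (∑ k, (∑ j, boolSign (ε j) * c k j) ^ 2) ^ m ≤
      2 ^ n * (gaussianMoment m * (∑ k, ∑ j, c k j ^ 2) ^ m) := by
  set σ : κ → ℝ := fun k => ∑ j, c k j ^ 2 with hσ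
  have hσ0 : ∀ k, 0 ≤ σ k := fun k => Finset.sum_nonneg fun _ _ => sq_nonneg _
  set S : (Fin n → Bool) → κ → ℝ := fun ε k => ∑ j, boolSign (ε j) * c k j with hS
  have hS0 : ∀ ε k, σ k = 0 → S ε k = 0 := by
    intro ε k h
    rw [hσ] at h
    have := (Finset.sum_eq_zero_iff_of_nonneg fun j _ => sq_nonneg (c k j)).mp h
    refine Finset.sum_eq_zero fun j hj => ?_
    rw [pow_eq_zero_iff two_ne_zero |>.mp (this j hj), mul_zero]
  change ∑ ε, (∑ k, S ε k ^ 2) ^ m ≤ 2 ^ n * (gaussianMoment m * (∑ k, σ k) ^ m)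
  rcases (Finset.sum_nonneg fun k (_ : k ∈ Finset.univ) => hσ0 k).eq_or_lt with hT | hT
  · have hk : ∀ k, σ k = 0 := fun k =>
      (Finset.sum_eq_zero_iff_of_nonneg fun k _ => hσ0 k).mp hT.symm k (Finset.mem_univ k)
    have hz : ∀ ε k, S ε k = 0 := fun ε k => hS0 ε k (hk k)
    cases m <;> simp [hz, hk, gaussianMoment]
  · set T := ∑ k, σ k with hTdef
    have hpoint : ∀ ε, (∑ k, S ε k ^ 2) ^ m ≤
        T ^ m * ∑ k, σ k / T * (S ε k ^ 2 / σ k) ^ m := by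
      intro ε
      have hJ := Real.pow_arith_mean_le_arith_mean_pow Finset.univ (fun k => σ k / T)
        (fun k => S ε k ^ 2 / σ k) (fun k _ => div_nonneg (hσ0 k) hT.le)
        (by rw [← Finset.sum_div, ← hTdef, div_self hT.ne'])
        (fun k _ => div_nonneg (sq_nonneg _) (hσ0 k)) m
      have e : ∑ k, S ε k ^ 2 = T * ∑ k, σ k / T * (S ε k ^ 2 / σ k) := by
        rw [Finset.mul_sum]
        refine Finset.sum_congr rfl fun k _ => ?_
        by_cases h : σ k = 0
        · simp [h, hS0 ε k h]
        · field_simp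
      rw [e, mul_pow]
      gcongr
    calc ∑ ε, (∑ k, S ε k ^ 2) ^ m
        ≤ ∑ ε, T ^ m * ∑ k, σ k / T * (S ε k ^ 2 / σ k) ^ m :=
          Finset.sum_le_sum fun ε _ => hpoint ε
      _ = T ^ m * ∑ k, σ k / T * ((∑ ε, S ε k ^ (2 * m)) / σ k ^ m) := by
          rw [← Finset.mul_sum, Finset.sum_comm]
          simp only [div_pow, ← pow_mul, Finset.sum_div, Finset.mul_sum]
      _ ≤ T ^ m * ∑ k, σ k / T * (2 ^ n * gaussianMoment m) := by
          gcongr with k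
          have := gaussianMoment_nonneg m
          refine div_le_of_le_mul₀ (pow_nonneg (hσ0 k) m) (by positivity) ?_
          rw [mul_assoc]
          exact sum_rademacher_pow_le n m (c k)
      _ = _ := by
          rw [← Finset.sum_mul, ← Finset.sum_div, ← hTdef, div_self hT.ne']
          ring

/-- Complex version of Khintchine's inequality for vector-valued Rademacher sums. -/
lemma sum_rademacher_norm_sq_sum_pow_le {κ : Type*} [Fintype κ] (n m : ℕ) (c : κ → Fin n → ℂ) :
    ∑ ε : Fin n → Bool, (∑ k, ‖∑ j, (boolSign (ε j) : ℂ) * c k j‖ ^ 2) ^ m ≤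
      2 ^ n * (gaussianMoment m * (∑ k, ∑ j, ‖c k j‖ ^ 2) ^ m) := by
  have h := sum_rademacher_sq_sum_pow_le n m
    (Sum.elim (fun k j => (c k j).re) (fun k j => (c k j).im))
  simpa [Fintype.sum_sum_type, ← Finset.sum_add_distrib, Complex.sq_norm, Complex.normSq_apply,
    ← sq] using h

instance matrixBorelSpace {m n : ℕ} : BorelSpace (Matrix (Fin m) (Fin n) ℂ) :=
  inferInstanceAs (BorelSpace (Fin m → Fin n → ℂ))

instance matrixSecondCountableTopology {m n : ℕ} :
    SecondCountableTopology (Matrix (Fin m) (Fin n) ℂ) :=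
  inferInstanceAs (SecondCountableTopology (Fin m → Fin n → ℂ))

instance unitaryGroupBorelSpace {d : ℕ} : BorelSpace (unitaryGroup (Fin d) ℂ) :=
  Subtype.borelSpace _

instance unitaryGroupSecondCountableTopology {d : ℕ} :
    SecondCountableTopology (unitaryGroup (Fin d) ℂ) :=
  TopologicalSpace.Subtype.secondCountableTopology _

/-- A left-invariant probability measure on a group is right-invariant. -/
lemma isMulRightInvariant_of_isMulLeftInvariant {G : Type*} [Group G] [MeasurableSpace G]
    [MeasurableMul₂ G] [MeasurableInv G] (μ : Measure G) [IsProbabilityMeasure μ]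
    [μ.IsMulLeftInvariant] : μ.IsMulRightInvariant := by
  have hν : μ.inv Set.univ = 1 := by simp [Measure.inv_apply]
  have : IsProbabilityMeasure μ.inv := ⟨hν⟩
  have h : μ = μ.inv := by
    refine Measure.ext_of_lintegral _ fun f hf => ?_
    calc ∫⁻ x, f x ∂μ = ∫⁻ y, ∫⁻ x, f (y * x) ∂μ ∂μ.inv := by
          simp [lintegral_mul_left_eq_self]
      _ = ∫⁻ x, ∫⁻ y, f (y * x) ∂μ.inv ∂μ :=
          lintegral_lintegral_swap (hf.comp measurable_mul).aemeasurable
      _ = ∫⁻ x, f x ∂μ.inv := by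
          simp [lintegral_mul_right_eq_self]
  rw [h]
  infer_instance

/-- Two prescribed orthonormal columns, one of them a basis vector, extend to a unitary matrix. -/
lemma exists_unitary_columns {d : ℕ} {s t : Fin d} (hst : s ≠ t) (x : Fin d → ℂ) (hxs : x s = 0)
    (hx : ∑ j, ‖x j‖ ^ 2 = 1) :
    ∃ W : unitaryGroup (Fin d) ℂ,
      (∀ j, (W : Matrix (Fin d) (Fin d) ℂ) j s = if j = s then 1 else 0) ∧
      ∀ j, (W : Matrix (Fin d) (Fin d) ℂ) j t = x j := by
  set v : Fin d → EuclideanSpace ℂ (Fin d) := fun i =>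
    if i = s then EuclideanSpace.single s 1 else WithLp.toLp 2 x with hv
  have hvs : v s = EuclideanSpace.single s 1 := by simp [hv]
  have hvt : v t = WithLp.toLp 2 x := by simp [hv, hst.symm]
  have hnorm : ‖(WithLp.toLp 2 x : EuclideanSpace ℂ (Fin d))‖ = 1 := by
    rw [EuclideanSpace.norm_eq]
    simp [hx]
  have horth : Orthonormal ℂ (({s, t} : Set (Fin d)).domRestrict v) := by
    constructor
    · rintro ⟨i, rfl | rfl⟩
      · simp [hvs]
      · simp only [Set.domRestrict_apply, hvt, hnorm]
    · rintro ⟨i, rfl | rfl⟩ ⟨j, rfl | rfl⟩ hij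
      · exact absurd rfl hij
      · simp [hvs, hvt, hxs, EuclideanSpace.inner_single_left]
      · simp [hvs, hvt, hxs, EuclideanSpace.inner_single_right]
      · exact absurd rfl hij
  obtain ⟨b, hb⟩ := horth.exists_orthonormalBasis_extension_of_card_eq (by simp)
  refine ⟨⟨_, (EuclideanSpace.basisFun (Fin d) ℂ).toMatrix_orthonormalBasis_mem_unitary b⟩, ?_, ?_⟩
  · intro j
    simp [Module.Basis.toMatrix_apply, hb s (by simp), hvs]
  · intro j
    simp [Module.Basis.toMatrix_apply, hb t (by simp), hvt]

lemma Xst_nonneg {d r : ℕ} (K : Fin r → Matrix (Fin d) (Fin d) ℂ) (s t : Fin d)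
    (U : unitaryGroup (Fin d) ℂ) : 0 ≤ Xst K s t U :=
  Finset.sum_nonneg fun _ _ => sq_nonneg _

lemma continuous_Xst {d r : ℕ} (K : Fin r → Matrix (Fin d) (Fin d) ℂ) (s t : Fin d) :
    Continuous (Xst K s t) := by
  unfold Xst
  have hU : Continuous fun U : unitaryGroup (Fin d) ℂ => (U : Matrix (Fin d) (Fin d) ℂ) :=
    continuous_subtype_val
  refine continuous_finsetSum _ fun i _ => ?_
  exact (((hU.star.matrix_mul continuous_const).matrix_mul hU).matrix_elem t s).norm.pow 2

/-- The transition probabilities out of `s` sum to one. -/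
lemma sum_Xst {d r : ℕ} {K : Fin r → Matrix (Fin d) (Fin d) ℂ} (hK : ∑ i, (K i)ᴴ * K i = 1)
    (s : Fin d) (U : unitaryGroup (Fin d) ℂ) : ∑ j, Xst K s j U = 1 := by
  have hU : star (U : Matrix (Fin d) (Fin d) ℂ) * (U : Matrix (Fin d) (Fin d) ℂ) = 1 :=
    (mem_unitaryGroup_iff').mp U.2
  have hU' : (U : Matrix (Fin d) (Fin d) ℂ) * star (U : Matrix (Fin d) (Fin d) ℂ) = 1 :=
    (mem_unitaryGroup_iff).mp U.2
  set B : Fin r → Matrix (Fin d) (Fin d) ℂ := fun i =>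
    star (U : Matrix (Fin d) (Fin d) ℂ) * K i * (U : Matrix (Fin d) (Fin d) ℂ) with hB
  have hBB : ∑ i, (B i)ᴴ * B i = 1 := by
    have : ∀ i, (B i)ᴴ * B i = star (U : Matrix (Fin d) (Fin d) ℂ) * ((K i)ᴴ * K i) *
        (U : Matrix (Fin d) (Fin d) ℂ) := by
      intro i
      simp only [hB, conjTranspose_mul, star_eq_conjTranspose, conjTranspose_conjTranspose]
      rw [star_eq_conjTranspose] at hU'
      calc _ = (U : Matrix (Fin d) (Fin d) ℂ)ᴴ * (K i)ᴴ *
            ((U : Matrix (Fin d) (Fin d) ℂ) * (U : Matrix (Fin d) (Fin d) ℂ)ᴴ) * K i *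
            (U : Matrix (Fin d) (Fin d) ℂ) := by simp only [Matrix.mul_assoc]
        _ = _ := by rw [hU']; simp only [Matrix.mul_assoc, Matrix.one_mul]
    simp only [this, ← Matrix.mul_sum, ← Matrix.sum_mul, hK, Matrix.mul_one, hU]
  have h := congrArg (fun M : Matrix (Fin d) (Fin d) ℂ => (M s s).re) hBB
  simp only [Matrix.sum_apply, Matrix.mul_apply, conjTranspose_apply, one_apply_eq, Complex.re_sum,
    Complex.one_re] at h
  unfold Xst
  rw [Finset.sum_comm, ← h]
  refine Finset.sum_congr rfl fun i _ => Finset.sum_congr rfl fun j _ => ?_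
  change ‖B i j s‖ ^ 2 = (star (B i j s) * B i j s).re
  rw [Complex.sq_norm, Complex.normSq_apply]
  simp

lemma Xst_le_one {d r : ℕ} {K : Fin r → Matrix (Fin d) (Fin d) ℂ} (hK : ∑ i, (K i)ᴴ * K i = 1)
    (s t : Fin d) (U : unitaryGroup (Fin d) ℂ) : Xst K s t U ≤ 1 := by
  rw [← sum_Xst hK s U]
  exact Finset.single_le_sum (f := fun j => Xst K s j U) (fun j _ => Xst_nonneg K s j U)
    (Finset.mem_univ t)

/-- Effect on `X_{st}` of changing the `t`-th basis vector while keeping the `s`-th one. -/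
lemma Xst_mul {d r : ℕ} (K : Fin r → Matrix (Fin d) (Fin d) ℂ) {s t : Fin d}
    (U W : unitaryGroup (Fin d) ℂ)
    (hs : ∀ j, (W : Matrix (Fin d) (Fin d) ℂ) j s = if j = s then 1 else 0) :
    Xst K s t (U * W) = ∑ i, ‖∑ j, star ((W : Matrix (Fin d) (Fin d) ℂ) j t) *
      (star (U : Matrix (Fin d) (Fin d) ℂ) * K i * (U : Matrix (Fin d) (Fin d) ℂ)) j s‖ ^ 2 := by
  unfold Xst
  refine Finset.sum_congr rfl fun i _ => ?_
  congr 2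
  set B := star (U : Matrix (Fin d) (Fin d) ℂ) * K i * (U : Matrix (Fin d) (Fin d) ℂ) with hB
  have e : star ((U * W : unitaryGroup (Fin d) ℂ) : Matrix (Fin d) (Fin d) ℂ) * K i *
      ((U * W : unitaryGroup (Fin d) ℂ) : Matrix (Fin d) (Fin d) ℂ) =
      star (W : Matrix (Fin d) (Fin d) ℂ) * (B * (W : Matrix (Fin d) (Fin d) ℂ)) := by
    simp only [Submonoid.coe_mul, star_mul, hB, Matrix.mul_assoc]
  rw [e, Matrix.mul_apply]
  refine Finset.sum_congr rfl fun j _ => ?_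
  rw [Matrix.mul_apply]
  simp [hs]

/-- Moment bound for the off-diagonal transition probabilities. -/
lemma integral_Xst_pow_le {d r : ℕ} (μ : Measure (unitaryGroup (Fin d) ℂ))
    [IsProbabilityMeasure μ] [μ.IsMulLeftInvariant] {K : Fin r → Matrix (Fin d) (Fin d) ℂ}
    (hK : ∑ i, (K i)ᴴ * K i = 1) {s t : Fin d} (hst : s ≠ t) (m : ℕ) :
    ∫ U, Xst K s t U ^ m ∂μ ≤ ((m : ℝ) / ((d : ℝ) - 1)) ^ m := by
  have hd : (2 : ℝ) ≤ d := by
    have : 2 ≤ d := by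
      have := s.2; have := t.2; have := Fin.val_ne_of_ne hst; omega
    exact_mod_cast this
  have hd1 : (0 : ℝ) < d - 1 := by linarith
  have := isMulRightInvariant_of_isMulLeftInvariant μ
  set q : ℝ := (Real.sqrt (d - 1))⁻¹ with hq
  have hq2 : q ^ 2 = ((d : ℝ) - 1)⁻¹ := by rw [hq, inv_pow, Real.sq_sqrt hd1.le]
  set x : (Fin d → Bool) → Fin d → ℂ := fun ε j =>
    if j = s then 0 else ((q * boolSign (ε j) : ℝ) : ℂ) with hx
  have hxnorm : ∀ ε, ∑ j, ‖x ε j‖ ^ 2 = 1 := by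
    intro ε
    have : ∀ j, ‖x ε j‖ ^ 2 = ((d : ℝ) - 1)⁻¹ - if j = s then ((d : ℝ) - 1)⁻¹ else 0 := by
      intro j
      by_cases h : j = s
      · simp [hx, h]
      · simp only [hx, h, if_false, Complex.norm_real, Real.norm_eq_abs, sq_abs, mul_pow,
          boolSign_sq, hq2]
        ring
    simp only [this, Finset.sum_sub_distrib, Finset.sum_ite_eq', Finset.mem_univ, if_true,
      Finset.sum_const, Finset.card_univ, Fintype.card_fin, nsmul_eq_mul]
    field_simp
  choose W hWs hWt using fun ε => exists_unitary_columns hst (x ε) (by simp [hx]) (hxnorm ε)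
  have hint : Integrable (fun U => Xst K s t U ^ m) μ := by
    refine Integrable.of_bound ((continuous_Xst K s t).pow m).measurable.aestronglyMeasurable 1
      (ae_of_all _ fun U => ?_)
    rw [Real.norm_of_nonneg (pow_nonneg (Xst_nonneg K s t U) m)]
    exact pow_le_one₀ (Xst_nonneg K s t U) (Xst_le_one hK s t U)
  have hintW : ∀ ε, Integrable (fun U => Xst K s t (U * W ε) ^ m) μ := fun ε =>
    hint.comp_mul_right (W ε)
  have hpoint : ∀ U, ∑ ε, Xst K s t (U * W ε) ^ m ≤
      2 ^ d * ((m : ℝ) / ((d : ℝ) - 1)) ^ m := by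
    intro U
    set B : Fin r → Matrix (Fin d) (Fin d) ℂ := fun i =>
      star (U : Matrix (Fin d) (Fin d) ℂ) * K i * (U : Matrix (Fin d) (Fin d) ℂ) with hB
    set c : Fin r → Fin d → ℂ := fun i j => if j = s then 0 else B i j s with hc
    have hX : ∀ ε, Xst K s t (U * W ε) =
        ((d : ℝ) - 1)⁻¹ * ∑ i, ‖∑ j, (boolSign (ε j) : ℂ) * c i j‖ ^ 2 := by
      intro ε
      rw [Xst_mul K U (W ε) (hWs ε), Finset.mul_sum]
      refine Finset.sum_congr rfl fun i _ => ?_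
      have : ∑ j, star ((W ε : Matrix (Fin d) (Fin d) ℂ) j t) * B i j s =
          (q : ℂ) * ∑ j, (boolSign (ε j) : ℂ) * c i j := by
        rw [Finset.mul_sum]
        refine Finset.sum_congr rfl fun j _ => ?_
        rw [hWt]
        by_cases h : j = s
        · simp [hx, hc, h]
        · simp only [hx, hc, h, if_false, Complex.star_def, Complex.conj_ofReal]
          push_cast
          ring
      rw [this, norm_mul, mul_pow, Complex.norm_real, Real.norm_eq_abs, sq_abs, hq2]
    have hcsum : ∑ i, ∑ j, ‖c i j‖ ^ 2 ≤ 1 := by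
      rw [← sum_Xst hK s U]
      unfold Xst
      rw [Finset.sum_comm]
      refine Finset.sum_le_sum fun j _ => Finset.sum_le_sum fun i _ => ?_
      by_cases h : j = s
      · simp [hc, h]
      · simp [hc, h, hB]
    have hcsum0 : 0 ≤ ∑ i, ∑ j, ‖c i j‖ ^ 2 := by positivity
    have hg := gaussianMoment_nonneg m
    calc ∑ ε, Xst K s t (U * W ε) ^ m
        = ((d : ℝ) - 1)⁻¹ ^ m *
          ∑ ε : Fin d → Bool, (∑ i, ‖∑ j, (boolSign (ε j) : ℂ) * c i j‖ ^ 2) ^ m := by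
          simp only [hX, mul_pow, Finset.mul_sum (Finset.univ : Finset (Fin d → Bool))]
      _ ≤ ((d : ℝ) - 1)⁻¹ ^ m * (2 ^ d * (gaussianMoment m * (∑ i, ∑ j, ‖c i j‖ ^ 2) ^ m)) := by
          gcongr
          exact sum_rademacher_norm_sq_sum_pow_le d m c
      _ ≤ ((d : ℝ) - 1)⁻¹ ^ m * (2 ^ d * ((m : ℝ) ^ m * 1)) := by
          gcongr
          · exact gaussianMoment_le_pow m
          · exact pow_le_one₀ hcsum0 hcsum
      _ = _ := by
          rw [div_eq_mul_inv, mul_pow]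
          ring
  have hsum : 2 ^ d * ∫ U, Xst K s t U ^ m ∂μ = ∫ U, ∑ ε, Xst K s t (U * W ε) ^ m ∂μ := by
    rw [integral_finsetSum _ fun ε _ => hintW ε]
    have : ∀ ε, ∫ U, Xst K s t (U * W ε) ^ m ∂μ = ∫ U, Xst K s t U ^ m ∂μ := fun ε =>
      integral_mul_right_eq_self (fun U => Xst K s t U ^ m) (W ε)
    simp [this]
  have hle : ∫ U, ∑ ε, Xst K s t (U * W ε) ^ m ∂μ ≤ 2 ^ d * ((m : ℝ) / ((d : ℝ) - 1)) ^ m := by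
    calc _ ≤ ∫ _U, 2 ^ d * ((m : ℝ) / ((d : ℝ) - 1)) ^ m ∂μ :=
          integral_mono (integrable_finsetSum _ fun ε _ => hintW ε) (integrable_const _) hpoint
      _ = _ := by simp
  rw [← hsum] at hle
  exact le_of_mul_le_mul_left hle (by positivity)

/-- Truncated exponential series: beyond order `m` every power is bounded by the `m`-th one. -/
lemma exp_mul_le_of_mem_unitInterval {x a θ : ℝ} (hx : 0 ≤ x) (hx1 : x ≤ 1) (ha : 0 < a)
    (hθ : 0 ≤ θ) (m : ℕ) :
    Real.exp (θ * x) ≤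
      Real.exp (θ * a) * (1 + (x / a) ^ m) + Real.exp θ * x ^ m := by
  have hs : ∀ y : ℝ, HasSum (fun n : ℕ => y ^ n / n.factorial) (Real.exp y) := fun y => by
    rw [Real.exp_eq_exp_ℝ]
    exact NormedSpace.expSeries_div_hasSum_exp y
  refine hasSum_le (fun n => ?_) (hs (θ * x))
    (((hs (θ * a)).mul_right (1 + (x / a) ^ m)).add ((hs θ).mul_right (x ^ m)))
  have hbound : x ^ n ≤ a ^ n * (1 + (x / a) ^ m) + x ^ m := by
    rcases le_total m n with h | h
    · have : x ^ n ≤ x ^ m := pow_le_pow_of_le_one hx hx1 h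
      have : 0 ≤ a ^ n * (1 + (x / a) ^ m) := by positivity
      linarith
    · have hxa : (x / a) ^ n ≤ 1 + (x / a) ^ m := by
        rcases le_total (x / a) 1 with h1 | h1
        · have := pow_le_one₀ (n := n) (by positivity : 0 ≤ x / a) h1
          have : 0 ≤ (x / a) ^ m := by positivity
          linarith
        · have := pow_le_pow_right₀ h1 h
          linarith
      have e : x ^ n = a ^ n * (x / a) ^ n := by
        rw [← mul_pow, mul_div_cancel₀ _ ha.ne']
      have : 0 ≤ x ^ m := by positivity
      have := mul_le_mul_of_nonneg_left hxa (pow_nonneg ha.le n)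
      linarith
  calc (θ * x) ^ n / n.factorial = θ ^ n / n.factorial * x ^ n := by rw [mul_pow]; ring
    _ ≤ θ ^ n / n.factorial * (a ^ n * (1 + (x / a) ^ m) + x ^ m) := by gcongr
    _ = _ := by rw [mul_pow]; ring

lemma pow_div_pred_le {m d : ℕ} (hm : 0 < m) (hd : 2 ≤ d) :
    ((m : ℝ) / ((d : ℝ) - 1)) ^ m ≤ 2 * ((m : ℝ) * (d + m) / (d : ℝ) ^ 2) ^ m := by
  have hd' : (2 : ℝ) ≤ d := by exact_mod_cast hd
  have hd1 : (0 : ℝ) < d - 1 := by linarith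
  rcases (Nat.succ_le_of_lt hm).eq_or_lt with h | h
  · obtain rfl : m = 1 := by omega
    simp only [Nat.cast_one, pow_one, one_mul]
    rw [← mul_div_assoc, div_le_div_iff₀ hd1 (by positivity)]
    nlinarith
  · have hm2 : (2 : ℝ) ≤ m := by exact_mod_cast h
    have hb : (m : ℝ) / ((d : ℝ) - 1) ≤ (m : ℝ) * (d + m) / (d : ℝ) ^ 2 := by
      rw [div_le_div_iff₀ hd1 (by positivity), mul_assoc]
      gcongr
      nlinarith
    have := pow_le_pow_left₀ (by positivity) hb m
    have h0 : (0 : ℝ) ≤ ((m : ℝ) * (d + m) / (d : ℝ) ^ 2) ^ m := by positivity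
    linarith

/-- Deviation bound, off-diagonal case. -/
theorem deviation_bound_offdiag :
    ∃ C : ℝ, 0 < C ∧
      ∀ (θ θ₀ d r : ℕ), 0 < θ → 0 < θ₀ → (θ₀ : ℝ) ≤ Real.sqrt d →
        Real.sqrt 6 * ((2 * θ₀ : ℕ) : ℝ) ^ ((7 : ℝ) / 4) < (d : ℝ) →
        ∀ (μ : Measure (Matrix.unitaryGroup (Fin d) ℂ)),
          IsProbabilityMeasure μ → μ.IsMulLeftInvariant →
          ∀ (K : Fin r → Matrix (Fin d) (Fin d) ℂ),
            (∑ i, (K i)ᴴ * K i = 1) →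
            ∀ (s t : Fin d), s ≠ t →
              ∀ ε : ℝ, 0 < ε →
                μ {U | ε ≤ Xst K s t U} ≤
                  ENNReal.ofReal (C * Real.exp (-(θ : ℝ) * ε) *
                    (Real.exp ((r : ℝ) * θ * θ₀ * ((d : ℝ) + θ₀) / (d : ℝ) ^ 2) +
                      Real.exp θ * ((r : ℝ) * θ₀ * ((d : ℝ) + θ₀) / (d : ℝ) ^ 2) ^ (θ₀ : ℕ))) := by
  refine ⟨3, by norm_num, ?_⟩
  intro θ m d r _ hm _ _ μ _ _ K hK s t hst ε _
  have hd : 2 ≤ d := by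
    have := s.2; have := t.2; have := Fin.val_ne_of_ne hst; omega
  have hd0 : (0 : ℝ) < d := by exact_mod_cast (by omega : 0 < d)
  have hm0 : (0 : ℝ) < m := by exact_mod_cast hm
  have hr : (1 : ℝ) ≤ r := by
    have : r ≠ 0 := by
      rintro rfl
      have := congrFun (congrFun hK s) s
      simp at this
    exact_mod_cast Nat.one_le_iff_ne_zero.mpr this
  set X := Xst K s t with hXdef
  set a : ℝ := (r : ℝ) * m * ((d : ℝ) + m) / (d : ℝ) ^ 2 with ha
  have ha0 : 0 < a := by positivity
  have hmom : ∫ U, X U ^ m ∂μ ≤ 2 * a ^ m := by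
    refine ((integral_Xst_pow_le μ hK hst m).trans (pow_div_pred_le hm hd)).trans ?_
    have hle : (m : ℝ) * (d + m) / (d : ℝ) ^ 2 ≤ a := by
      rw [ha, mul_assoc (r : ℝ), mul_div_assoc (r : ℝ)]
      exact le_mul_of_one_le_left (by positivity) hr
    gcongr
  have hXm : Measurable X := (continuous_Xst K s t).measurable
  have hint : Integrable (fun U => X U ^ m) μ := by
    refine Integrable.of_bound (hXm.pow_const m).aestronglyMeasurable 1 (ae_of_all _ fun U => ?_)
    rw [Real.norm_of_nonneg (pow_nonneg (Xst_nonneg K s t U) m)]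
    exact pow_le_one₀ (Xst_nonneg K s t U) (Xst_le_one hK s t U)
  set g : unitaryGroup (Fin d) ℂ → ℝ := fun U =>
    Real.exp (θ * a) + (Real.exp (θ * a) / a ^ m + Real.exp θ) * X U ^ m with hg
  have hgint : Integrable g μ := (integrable_const _).add (hint.const_mul _)
  have hgX : ∀ U, Real.exp (θ * X U) ≤ g U := by
    intro U
    refine (exp_mul_le_of_mem_unitInterval (Xst_nonneg K s t U) (Xst_le_one hK s t U) ha0
      (Nat.cast_nonneg θ) m).trans_eq ?_
    simp only [hg, div_pow]
    ring
  have hgval : ∫ U, g U ∂μ ≤ 3 * (Real.exp (θ * a) + Real.exp θ * a ^ m) := by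
    rw [hg, integral_add (integrable_const _) (hint.const_mul _), integral_const_mul]
    simp only [integral_const, probReal_univ, one_smul]
    have h1 : (Real.exp (θ * a) / a ^ m + Real.exp θ) * ∫ U, X U ^ m ∂μ ≤
        (Real.exp (θ * a) / a ^ m + Real.exp θ) * (2 * a ^ m) := by gcongr
    have h2 : (Real.exp (θ * a) / a ^ m + Real.exp θ) * (2 * a ^ m) =
        2 * Real.exp (θ * a) + 2 * (Real.exp θ * a ^ m) := by field_simp
    have h3 : 0 ≤ Real.exp θ * a ^ m := by positivity
    linarith
  have hmarkov : Real.exp (θ * ε) * μ.real {U | Real.exp (θ * ε) ≤ g U} ≤ ∫ U, g U ∂μ :=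
    mul_meas_ge_le_integral_of_nonneg
      (ae_of_all _ fun U => (Real.exp_pos _).le.trans (hgX U)) hgint _
  have hsub : {U | ε ≤ X U} ⊆ {U | Real.exp (θ * ε) ≤ g U} := fun U hU =>
    (Real.exp_le_exp.mpr (mul_le_mul_of_nonneg_left hU (Nat.cast_nonneg θ))).trans (hgX U)
  refine (measure_mono hsub).trans ?_
  rw [← ofReal_measureReal]
  refine ENNReal.ofReal_le_ofReal ?_
  rw [show (r : ℝ) * θ * m * ((d : ℝ) + m) / (d : ℝ) ^ 2 = θ * a by rw [ha]; ring, neg_mul,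
    Real.exp_neg, mul_right_comm, ← div_eq_mul_inv, le_div_iff₀ (Real.exp_pos _), mul_comm]
  exact hmarkov.trans hgval

end
end
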